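/- Under the BARSS mixture setup described in the context, for every τ > 0 the τ-outage probability satisfies 1 − Σ_{k=1}^K p_k* ∫₀^∞ f_k(r)·E[V̂_k⁺(H_k,τ,r)] dr ≤ P(τ-outage) ≤ 1 − Σ_{k=1}^K p_k* ∫₀^∞ f_k(r)·E[V̂_k⁻(H_k,τ,r)] dr. -/

import Mathlib

open MeasureTheory ProbabilityTheory
open scoped ProbabilityTheory ENNReal

/-- The standard normal cumulative distribution function. -/
noncomputable def stdNormalCDF (x : ℝ) : ℝ :=
  (Real.sqrt (2 * Real.pi))⁻¹ * ∫ t in Set.Iic x, Real.exp (-(t ^ 2) / 2)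

/-- The Berry–Esseen multiplicative function `c(x) = min{0.4785, 31.935/(1+|x|³)}`. -/
noncomputable def berryC (x : ℝ) : ℝ := min 0.4785 (31.935 / (1 + |x| ^ 3))

/-!
A link attains the rate `τ` exactly when its fading exceeds a threshold and the interference stays
below a tolerance determined by the fading. Since fading and interference are independent, the
probability of attaining `τ` at a given distance is the mean, over the fading, of the distribution
function of the interference evaluated at that tolerance. This mean is monotone in the distribution
function, which may therefore be replaced by its normal envelopes before averaging over the distance
and the tiers; outage is the complementary event.
-/

section Normal

lemma integrable_exp_neg_sq_div_two : Integrable fun t : ℝ => Real.exp (-(t ^ 2) / 2) := by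
  convert integrable_exp_neg_mul_sq (b := 1 / 2) (by norm_num) using 3
  ring

lemma stdNormalCDF_mono : Monotone stdNormalCDF := fun _ _ hxy =>
  mul_le_mul_of_nonneg_left
    (setIntegral_mono_set integrable_exp_neg_sq_div_two.integrableOn
      (.of_forall fun _ => (Real.exp_pos _).le) (Set.Iic_subset_Iic.mpr hxy).eventuallyLE)
    (by positivity)

lemma measurable_berryC : Measurable berryC := by
  unfold berryC
  fun_prop

/-- The lower envelope `max{0, Ψ(y) - ξ c(y)}`, `y = (x - m) / s`, of a distribution function which
is within `ξ c` of the normal one after centring at `m` and scaling by `s`. -/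
noncomputable def normalLowerEnvelope (m s ξ x : ℝ) : ℝ :=
  max 0 (stdNormalCDF ((x - m) / s) - ξ * berryC ((x - m) / s))

/-- The upper envelope `min{1, Ψ(y) + ξ c(y)}`, `y = (x - m) / s`, of a distribution function which
is within `ξ c` of the normal one after centring at `m` and scaling by `s`. -/
noncomputable def normalUpperEnvelope (m s ξ x : ℝ) : ℝ :=
  min 1 (stdNormalCDF ((x - m) / s) + ξ * berryC ((x - m) / s))

lemma normalLowerEnvelope_nonneg (m s ξ x : ℝ) : 0 ≤ normalLowerEnvelope m s ξ x :=
  le_max_left _ _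

lemma normalUpperEnvelope_le_one (m s ξ x : ℝ) : normalUpperEnvelope m s ξ x ≤ 1 :=
  min_le_left _ _

variable {R : Type*} [MeasurableSpace R] {m s ξ : R → ℝ}

lemma measurable_normalLowerEnvelope (hm : Measurable m) (hs : Measurable s) (hξ : Measurable ξ) :
    Measurable (Function.uncurry fun r => normalLowerEnvelope (m r) (s r) (ξ r)) := by
  have hΨ := stdNormalCDF_mono.measurable
  have hc := measurable_berryC
  unfold normalLowerEnvelope Function.uncurry
  fun_prop

lemma measurable_normalUpperEnvelope (hm : Measurable m) (hs : Measurable s) (hξ : Measurable ξ) :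
    Measurable (Function.uncurry fun r => normalUpperEnvelope (m r) (s r) (ξ r)) := by
  have hΨ := stdNormalCDF_mono.measurable
  have hc := measurable_berryC
  unfold normalUpperEnvelope Function.uncurry
  fun_prop

variable {Ω : Type*} [MeasurableSpace Ω] {μ : Measure Ω} [IsProbabilityMeasure μ]

lemma measureReal_le_mem_Icc_normalEnvelope {Y : Ω → ℝ} {m s ξ : ℝ} (hs : 0 < s)
    (hY : ∀ y, |μ.real {ω | (Y ω - m) / s ≤ y} - stdNormalCDF y| ≤ ξ * berryC y) (x : ℝ) :
    μ.real {ω | Y ω ≤ x} ∈ Set.Icc (normalLowerEnvelope m s ξ x) (normalUpperEnvelope m s ξ x) := by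
  have hstd : {ω | (Y ω - m) / s ≤ (x - m) / s} = {ω | Y ω ≤ x} := by
    simp only [div_le_div_iff_of_pos_right hs, sub_le_sub_iff_right]
  obtain ⟨hlow, hupp⟩ := abs_sub_le_iff.1 (hstd ▸ hY ((x - m) / s))
  exact ⟨max_le measureReal_nonneg (by linarith), le_min measureReal_le_one (by linarith)⟩

end Normal

section ConnectionDistance

/-- The law on `ℝ` of a nonnegative connection distance with density `f` on `[0, ∞)`; the values of
`f` on the negative half-line are discarded. -/
noncomputable def distanceLaw (f : ℝ → ℝ) : Measure ℝ :=
  (volume.restrict (Set.Ici 0)).withDensity fun r => ENNReal.ofReal (f r)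

variable {f : ℝ → ℝ}

lemma integral_distanceLaw (hf : Measurable f) (hf0 : ∀ r, 0 ≤ f r) (g : ℝ → ℝ) :
    ∫ r, g r ∂distanceLaw f = ∫ r in Set.Ici 0, f r * g r := by
  rw [distanceLaw, integral_withDensity_eq_integral_toReal_smul hf.ennreal_ofReal
    (.of_forall fun _ => ENNReal.ofReal_lt_top)]
  simp only [ENNReal.toReal_ofReal (hf0 _), smul_eq_mul]

lemma isProbabilityMeasure_distanceLaw (hf : Measurable f) (hf0 : ∀ r, 0 ≤ f r)
    (hf1 : ∫ r in Set.Ici 0, f r = 1) : IsProbabilityMeasure (distanceLaw f) := by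
  refine isProbabilityMeasure_iff_real.2 ?_
  simpa [hf1] using integral_distanceLaw hf hf0 fun _ => 1

lemma ae_distanceLaw_of_forall_nonneg {p : ℝ → Prop} (hp : ∀ r, 0 ≤ r → p r) :
    ∀ᵐ r ∂distanceLaw f, p r :=
  (withDensity_absolutelyContinuous _ _).ae_le (ae_restrict_of_forall_mem measurableSet_Ici hp)

end ConnectionDistance

lemma measureReal_prodMk_mem_eq_integral {Ω α β : Type*} [MeasurableSpace Ω] [MeasurableSpace α]
    [MeasurableSpace β] {μ : Measure Ω} [IsFiniteMeasure μ] {X : Ω → α} {Y : Ω → β}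
    (hX : AEMeasurable X μ) (hY : AEMeasurable Y μ) (hXY : IndepFun X Y μ) {T : Set (α × β)}
    (hT : MeasurableSet T) :
    μ.real {ω | (X ω, Y ω) ∈ T} = ∫ ω, μ.real {ω' | (X ω, Y ω') ∈ T} ∂μ := by
  have hsection (x : α) : (μ.map Y) (Prod.mk x ⁻¹' T) = μ {ω' | (x, Y ω') ∈ T} :=
    Measure.map_apply_of_aemeasurable hY (measurable_prodMk_left hT)
  have hmeas : Measurable fun x => μ {ω' | (x, Y ω') ∈ T} := by
    simpa only [hsection] using measurable_measure_prodMk_left (ν := μ.map Y) hT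
  calc μ.real {ω | (X ω, Y ω) ∈ T} = ((μ.map X).prod (μ.map Y)).real T := by
        rw [← hXY.map_prod_eq_prod_map_map hX hY,
          map_measureReal_apply_of_aemeasurable (hX.prodMk hY) hT]
        rfl
    _ = (∫⁻ ω, μ {ω' | (X ω, Y ω') ∈ T} ∂μ).toReal := by
        simp only [measureReal_def, Measure.prod_apply hT, hsection,
          lintegral_map' hmeas.aemeasurable hX]
    _ = ∫ ω, μ.real {ω' | (X ω, Y ω') ∈ T} ∂μ :=
        (integral_toReal (hmeas.comp_aemeasurable hX)
          (.of_forall fun _ => measure_lt_top _ _)).symm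

lemma measurable_measureReal_le {Ω R : Type*} [MeasurableSpace Ω] [MeasurableSpace R]
    {μ : Measure Ω} [SFinite μ] {J : R → Ω → ℝ} (hJ : Measurable (Function.uncurry J)) :
    Measurable (Function.uncurry fun r x => μ.real {ω | J r ω ≤ x}) := by
  have hset : MeasurableSet {y : (R × ℝ) × Ω | J y.1.1 y.2 ≤ y.1.2} :=
    measurableSet_le (hJ.comp (by fun_prop : Measurable fun y : (R × ℝ) × Ω => (y.1.1, y.2)))
      (by fun_prop)
  exact (measurable_measure_prodMk_left hset).ennreal_toReal

section Link

/-- The rate `log(1 + SINR)` of a link with transmit power `P`, noise power `N₀`, processing gain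
`PG`, path loss `g`, fading `h` and aggregate interference `i`. -/
noncomputable def linkRate (P N₀ PG g h i : ℝ) : ℝ :=
  Real.log (1 + P * h * g / (N₀ + i / PG))

/-- The least fading with which the link attains rate `τ` in the absence of interference. -/
noncomputable def fadingThreshold (P N₀ τ g : ℝ) : ℝ :=
  (Real.exp τ - 1) * N₀ / (P * g)

/-- The largest aggregate interference under which the link with fading `h` attains rate `τ`. -/
noncomputable def interferenceTolerance (P N₀ PG τ g h : ℝ) : ℝ :=
  P * (h * g / (Real.exp τ - 1) - N₀ / P) * PG

/-- The function `V̂` of the paper with a general `F` in place of the normal envelope: if `F` is the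
distribution function of the interference, this is the conditional probability, given fading `h`,
that the link attains rate `τ`. -/
noncomputable def coverage (P N₀ PG τ g : ℝ) (F : ℝ → ℝ) (h : ℝ) : ℝ :=
  if fadingThreshold P N₀ τ g ≤ h then F (interferenceTolerance P N₀ PG τ g h) else 0

variable {P N₀ PG τ g h i : ℝ}

lemma le_linkRate_iff_mul_le (hP : 0 < P) (hg : 0 < g) (hh : 0 ≤ h) (hpos : 0 < N₀ + i / PG) :
    τ ≤ linkRate P N₀ PG g h i ↔ (Real.exp τ - 1) * (N₀ + i / PG) ≤ P * h * g := by
  rw [linkRate, Real.le_log_iff_exp_le (by positivity), ← sub_le_iff_le_add', le_div_iff₀ hpos]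

lemma le_interferenceTolerance_iff (hP : P ≠ 0) (hPG : 0 < PG) (hτ : 0 < τ) :
    i ≤ interferenceTolerance P N₀ PG τ g h ↔
      (Real.exp τ - 1) * (N₀ + i / PG) ≤ P * h * g := by
  have hexp : 0 < Real.exp τ - 1 := sub_pos.2 (Real.one_lt_exp_iff.2 hτ)
  have htol : interferenceTolerance P N₀ PG τ g h
      = (P * h * g / (Real.exp τ - 1) - N₀) * PG := by
    unfold interferenceTolerance
    field_simp
  rw [htol, ← div_le_iff₀ hPG, le_sub_iff_add_le', le_div_iff₀' hexp]

lemma fadingThreshold_le_of_mul_le (hP : 0 < P) (hg : 0 < g) (hPG : 0 ≤ PG) (hτ : 0 ≤ τ)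
    (hi : 0 ≤ i) (hle : (Real.exp τ - 1) * (N₀ + i / PG) ≤ P * h * g) :
    fadingThreshold P N₀ τ g ≤ h := by
  have hexp : 0 ≤ Real.exp τ - 1 := sub_nonneg.2 (Real.one_le_exp hτ)
  rw [fadingThreshold, div_le_iff₀ (by positivity)]
  calc (Real.exp τ - 1) * N₀ ≤ (Real.exp τ - 1) * (N₀ + i / PG) := by
        gcongr
        exact le_add_of_nonneg_right (by positivity)
    _ ≤ h * (P * g) := by linarith

lemma le_linkRate_iff (hP : 0 < P) (hg : 0 < g) (hPG : 0 < PG) (hτ : 0 < τ) (hh : 0 ≤ h)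
    (hi : 0 ≤ i) (hpos : 0 < N₀ + i / PG) :
    τ ≤ linkRate P N₀ PG g h i ↔
      fadingThreshold P N₀ τ g ≤ h ∧ i ≤ interferenceTolerance P N₀ PG τ g h := by
  rw [le_linkRate_iff_mul_le hP hg hh hpos, le_interferenceTolerance_iff hP.ne' hPG hτ,
    iff_and_self]
  exact fadingThreshold_le_of_mul_le hP hg hPG.le hτ.le hi

lemma coverage_mono {F₁ F₂ : ℝ → ℝ} (hF : ∀ x, F₁ x ≤ F₂ x) :
    coverage P N₀ PG τ g F₁ h ≤ coverage P N₀ PG τ g F₂ h := by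
  unfold coverage
  split_ifs
  exacts [hF _, le_rfl]

lemma coverage_mem_Icc {F : ℝ → ℝ} (hF : ∀ x, F x ∈ Set.Icc 0 1) :
    coverage P N₀ PG τ g F h ∈ Set.Icc 0 1 := by
  unfold coverage
  split_ifs
  exacts [hF _, Set.left_mem_Icc.2 zero_le_one]

variable {R : Type*} [MeasurableSpace R] {G : R → ℝ}

lemma measurable_coverage (hG : Measurable G) {F : R → ℝ → ℝ}
    (hF : Measurable (Function.uncurry F)) :
    Measurable fun z : R × ℝ => coverage P N₀ PG τ (G z.1) (F z.1) z.2 := by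
  have hthr : Measurable fun z : R × ℝ => fadingThreshold P N₀ τ (G z.1) := by
    unfold fadingThreshold; fun_prop
  have htol : Measurable fun z : R × ℝ => interferenceTolerance P N₀ PG τ (G z.1) z.2 := by
    unfold interferenceTolerance; fun_prop
  exact .ite (measurableSet_le hthr measurable_snd) (hF.comp (measurable_fst.prodMk htol))
    measurable_const

variable {Ω : Type*} [MeasurableSpace Ω] {μ : Measure Ω} [IsProbabilityMeasure μ]

lemma measureReal_linkRate_lt {H J : Ω → ℝ} (hP : 0 < P) (hg : 0 < g) (hPG : 0 < PG) (hτ : 0 < τ)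
    (hH : Measurable H) (hJ : Measurable J) (hHJ : IndepFun H J μ) (hH0 : ∀ᵐ ω ∂μ, 0 ≤ H ω)
    (hJ0 : ∀ᵐ ω ∂μ, 0 ≤ J ω) (hpos : ∀ᵐ ω ∂μ, 0 < N₀ + J ω / PG) :
    μ.real {ω | linkRate P N₀ PG g (H ω) (J ω) < τ} =
      1 - ∫ ω, coverage P N₀ PG τ g (fun x => μ.real {ω' | J ω' ≤ x}) (H ω) ∂μ := by
  let T : Set (ℝ × ℝ) :=
    {z | fadingThreshold P N₀ τ g ≤ z.1 ∧ z.2 ≤ interferenceTolerance P N₀ PG τ g z.1}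
  have hT : MeasurableSet T := by
    unfold T interferenceTolerance
    measurability
  have hcov : MeasurableSet {ω | (H ω, J ω) ∈ T} := hH.prodMk hJ hT
  have hcompl : μ.real {ω | linkRate P N₀ PG g (H ω) (J ω) < τ} =
      μ.real {ω | (H ω, J ω) ∈ T}ᶜ := measureReal_congr <| by
    filter_upwards [hH0, hJ0, hpos] with ω hHω hJω hposω
    exact propext (not_le.symm.trans (le_linkRate_iff hP hg hPG hτ hHω hJω hposω).not)
  have hsection (h : ℝ) : μ.real {ω | (h, J ω) ∈ T} =
      coverage P N₀ PG τ g (fun x => μ.real {ω | J ω ≤ x}) h := by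
    by_cases hthr : fadingThreshold P N₀ τ g ≤ h <;> simp [T, coverage, hthr]
  rw [hcompl, probReal_compl_eq_one_sub hcov,
    measureReal_prodMk_mem_eq_integral hH.aemeasurable hJ.aemeasurable hHJ hT]
  simp only [hsection]

end Link

section Tier

variable {Ω R : Type*} [MeasurableSpace Ω] [MeasurableSpace R] {μ : Measure Ω} {D : Measure R}
  {P N₀ PG τ : ℝ} {G : R → ℝ} {H : Ω → ℝ}

section FiniteMeasure

variable [IsFiniteMeasure μ] [IsFiniteMeasure D] {F F₁ F₂ : R → ℝ → ℝ}

lemma integrable_coverage_prod (hG : Measurable G) (hH : Measurable H)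
    (hF : Measurable (Function.uncurry F)) (hF01 : ∀ᵐ r ∂D, ∀ x, F r x ∈ Set.Icc 0 1) :
    Integrable (fun z : R × Ω => coverage P N₀ PG τ (G z.1) (F z.1) (H z.2)) (D.prod μ) := by
  refine .of_mem_Icc 0 1 ((measurable_coverage hG hF).comp
    (measurable_fst.prodMk (hH.comp measurable_snd))).aemeasurable ?_
  filter_upwards [Measure.quasiMeasurePreserving_fst.ae hF01] with z hz
  exact coverage_mem_Icc hz

lemma integral_coverage_mono (hG : Measurable G) (hH : Measurable H)
    (hF₁ : Measurable (Function.uncurry F₁)) (hF₂ : Measurable (Function.uncurry F₂))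
    (hF₁0 : ∀ᵐ r ∂D, ∀ x, 0 ≤ F₁ r x) (hF₁₂ : ∀ᵐ r ∂D, ∀ x, F₁ r x ≤ F₂ r x)
    (hF₂1 : ∀ᵐ r ∂D, ∀ x, F₂ r x ≤ 1) :
    ∫ r, ∫ ω, coverage P N₀ PG τ (G r) (F₁ r) (H ω) ∂μ ∂D ≤
      ∫ r, ∫ ω, coverage P N₀ PG τ (G r) (F₂ r) (H ω) ∂μ ∂D := by
  have hint₁ : Integrable (fun z : R × Ω => coverage P N₀ PG τ (G z.1) (F₁ z.1) (H z.2))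
      (D.prod μ) := integrable_coverage_prod hG hH hF₁ <| by
    filter_upwards [hF₁0, hF₁₂, hF₂1] with r h0 hle h1 x using ⟨h0 x, (hle x).trans (h1 x)⟩
  have hint₂ : Integrable (fun z : R × Ω => coverage P N₀ PG τ (G z.1) (F₂ z.1) (H z.2))
      (D.prod μ) := integrable_coverage_prod hG hH hF₂ <| by
    filter_upwards [hF₁0, hF₁₂, hF₂1] with r h0 hle h1 x using ⟨(h0 x).trans (hle x), h1 x⟩
  rw [integral_integral hint₁, integral_integral hint₂]
  refine integral_mono_ae hint₁ hint₂ ?_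
  filter_upwards [Measure.quasiMeasurePreserving_fst.ae hF₁₂] with z hz
  exact coverage_mono hz

end FiniteMeasure

variable [IsProbabilityMeasure μ] [IsProbabilityMeasure D] {J : R → Ω → ℝ} {lo up : R → ℝ → ℝ}

lemma integral_measureReal_linkRate_lt (hP : 0 < P) (hPG : 0 < PG) (hτ : 0 < τ)
    (hG : Measurable G) (hG0 : ∀ᵐ r ∂D, 0 < G r) (hH : Measurable H) (hH0 : ∀ᵐ ω ∂μ, 0 ≤ H ω)
    (hJ : Measurable (Function.uncurry J)) (hJ0 : ∀ᵐ r ∂D, ∀ᵐ ω ∂μ, 0 ≤ J r ω)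
    (hHJ : ∀ᵐ r ∂D, IndepFun H (J r) μ) (hpos : ∀ᵐ r ∂D, ∀ᵐ ω ∂μ, 0 < N₀ + J r ω / PG) :
    ∫ r, μ.real {ω | linkRate P N₀ PG (G r) (H ω) (J r ω) < τ} ∂D =
      1 - ∫ r, ∫ ω, coverage P N₀ PG τ (G r) (fun x => μ.real {ω' | J r ω' ≤ x}) (H ω) ∂μ ∂D := by
  have hint : Integrable (fun z : R × Ω => coverage P N₀ PG τ (G z.1)
      (fun x => μ.real {ω | J z.1 ω ≤ x}) (H z.2)) (D.prod μ) :=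
    integrable_coverage_prod hG hH (measurable_measureReal_le hJ)
      (.of_forall fun _ _ => ⟨measureReal_nonneg, measureReal_le_one⟩)
  calc ∫ r, μ.real {ω | linkRate P N₀ PG (G r) (H ω) (J r ω) < τ} ∂D
      = ∫ r, (1 - ∫ ω, coverage P N₀ PG τ (G r) (fun x => μ.real {ω' | J r ω' ≤ x}) (H ω) ∂μ) ∂D :=
        integral_congr_ae <| by
          filter_upwards [hG0, hJ0, hHJ, hpos] with r hGr hJr hindep hposr
          exact measureReal_linkRate_lt hP hGr hPG hτ hH (hJ.comp measurable_prodMk_left) hindep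
            hH0 hJr hposr
    _ = 1 - ∫ r, ∫ ω, coverage P N₀ PG τ (G r) (fun x => μ.real {ω' | J r ω' ≤ x}) (H ω) ∂μ ∂D := by
        rw [integral_sub (integrable_const 1) hint.integral_prod_left, integral_const,
          probReal_univ, one_smul]

lemma integral_measureReal_linkRate_lt_mem_Icc (hP : 0 < P) (hPG : 0 < PG) (hτ : 0 < τ)
    (hG : Measurable G) (hG0 : ∀ᵐ r ∂D, 0 < G r) (hH : Measurable H) (hH0 : ∀ᵐ ω ∂μ, 0 ≤ H ω)
    (hJ : Measurable (Function.uncurry J)) (hJ0 : ∀ᵐ r ∂D, ∀ᵐ ω ∂μ, 0 ≤ J r ω)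
    (hHJ : ∀ᵐ r ∂D, IndepFun H (J r) μ) (hpos : ∀ᵐ r ∂D, ∀ᵐ ω ∂μ, 0 < N₀ + J r ω / PG)
    (hlo : Measurable (Function.uncurry lo)) (hup : Measurable (Function.uncurry up))
    (hlo0 : ∀ᵐ r ∂D, ∀ x, 0 ≤ lo r x) (hup1 : ∀ᵐ r ∂D, ∀ x, up r x ≤ 1)
    (hloup : ∀ᵐ r ∂D, ∀ x, μ.real {ω | J r ω ≤ x} ∈ Set.Icc (lo r x) (up r x)) :
    ∫ r, μ.real {ω | linkRate P N₀ PG (G r) (H ω) (J r ω) < τ} ∂D ∈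
      Set.Icc (1 - ∫ r, ∫ ω, coverage P N₀ PG τ (G r) (up r) (H ω) ∂μ ∂D)
        (1 - ∫ r, ∫ ω, coverage P N₀ PG τ (G r) (lo r) (H ω) ∂μ ∂D) := by
  rw [integral_measureReal_linkRate_lt hP hPG hτ hG hG0 hH hH0 hJ hJ0 hHJ hpos]
  have hcdf : Measurable (Function.uncurry fun r x => μ.real {ω | J r ω ≤ x}) :=
    measurable_measureReal_le hJ
  exact ⟨sub_le_sub_left (integral_coverage_mono hG hH hcdf hup
      (.of_forall fun _ _ => measureReal_nonneg)
      (hloup.mono fun _ hr x => (hr x).2) hup1) 1,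
    sub_le_sub_left (integral_coverage_mono hG hH hlo hcdf hlo0
      (hloup.mono fun _ hr x => (hr x).1)
      (.of_forall fun _ _ => measureReal_le_one)) 1⟩

end Tier

lemma sum_mul_mem_Icc_one_sub {ι : Type*} [Fintype ι] {p a l u : ι → ℝ} (hp : ∀ k, 0 ≤ p k)
    (hp1 : ∑ k, p k = 1) (ha : ∀ k, a k ∈ Set.Icc (1 - u k) (1 - l k)) :
    ∑ k, p k * a k ∈ Set.Icc (1 - ∑ k, p k * u k) (1 - ∑ k, p k * l k) := by
  have hsub (b : ι → ℝ) : 1 - ∑ k, p k * b k = ∑ k, p k * (1 - b k) := by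
    simp only [mul_sub, mul_one, Finset.sum_sub_distrib, hp1]
  rw [hsub, hsub]
  exact ⟨Finset.sum_le_sum fun k _ => mul_le_mul_of_nonneg_left (ha k).1 (hp k),
    Finset.sum_le_sum fun k _ => mul_le_mul_of_nonneg_left (ha k).2 (hp k)⟩

/-- `p k` is the association probability of tier `k`, and `D k` the conditional law of its
connection distance. -/
theorem barss_outage_probability_bounds_general {ι Ω R : Type*} [Fintype ι] [MeasurableSpace Ω]
    [MeasurableSpace R] {μ : Measure Ω} [IsProbabilityMeasure μ] {D : ι → Measure R}
    [∀ k, IsProbabilityMeasure (D k)] {P p : ι → ℝ} {N₀ PG τ : ℝ} {G : ι → R → ℝ}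
    {H : ι → Ω → ℝ} {J : ι → R → Ω → ℝ} {lo up : ι → R → ℝ → ℝ}
    (hp : ∀ k, 0 ≤ p k) (hp1 : ∑ k, p k = 1)
    (hP : ∀ k, 0 < P k) (hPG : 0 < PG) (hτ : 0 < τ)
    (hG : ∀ k, Measurable (G k)) (hG0 : ∀ k, ∀ᵐ r ∂D k, 0 < G k r)
    (hH : ∀ k, Measurable (H k)) (hH0 : ∀ k, ∀ᵐ ω ∂μ, 0 ≤ H k ω)
    (hJ : ∀ k, Measurable (Function.uncurry (J k)))
    (hJ0 : ∀ k, ∀ᵐ r ∂D k, ∀ᵐ ω ∂μ, 0 ≤ J k r ω)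
    (hHJ : ∀ k, ∀ᵐ r ∂D k, IndepFun (H k) (J k r) μ)
    (hpos : ∀ k, ∀ᵐ r ∂D k, ∀ᵐ ω ∂μ, 0 < N₀ + J k r ω / PG)
    (hlo : ∀ k, Measurable (Function.uncurry (lo k)))
    (hup : ∀ k, Measurable (Function.uncurry (up k)))
    (hlo0 : ∀ k, ∀ᵐ r ∂D k, ∀ x, 0 ≤ lo k r x) (hup1 : ∀ k, ∀ᵐ r ∂D k, ∀ x, up k r x ≤ 1)
    (hloup : ∀ k, ∀ᵐ r ∂D k, ∀ x, μ.real {ω | J k r ω ≤ x} ∈ Set.Icc (lo k r x) (up k r x)) :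
    ∑ k, p k * ∫ r, μ.real {ω | linkRate (P k) N₀ PG (G k r) (H k ω) (J k r ω) < τ} ∂D k ∈
      Set.Icc
        (1 - ∑ k, p k * ∫ r, ∫ ω, coverage (P k) N₀ PG τ (G k r) (up k r) (H k ω) ∂μ ∂D k)
        (1 - ∑ k, p k * ∫ r, ∫ ω, coverage (P k) N₀ PG τ (G k r) (lo k r) (H k ω) ∂μ ∂D k) :=
  sum_mul_mem_Icc_one_sub hp hp1 fun k =>
    integral_measureReal_linkRate_lt_mem_Icc (hP k) hPG hτ (hG k) (hG0 k) (hH k) (hH0 k) (hJ k)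
      (hJ0 k) (hHJ k) (hpos k) (hlo k) (hup k) (hlo0 k) (hup1 k) (hloup k)

/-- Theorem 6: bounds on the τ-outage probability under the BARSS association
policy (mixture over tiers and connection distances). -/
theorem barss_outage_probability_bounds
    {Ω : Type*} [MeasureSpace Ω] [IsProbabilityMeasure (ℙ : Measure Ω)]
    (K : ℕ) (hK : 1 ≤ K)
    (P : Fin K → ℝ) (hP : ∀ k, 0 < P k)
    (G : Fin K → ℝ → ℝ) (hGmeas : ∀ k, Measurable (G k))
    (hGpos : ∀ k, ∀ r : ℝ, 0 ≤ r → 0 < G k r)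
    (N₀ PG : ℝ) (hN₀ : 0 ≤ N₀) (hPG : 1 ≤ PG)
    (pstar : Fin K → ℝ) (hpstar : ∀ k, 0 ≤ pstar k) (hpsum : ∑ k, pstar k = 1)
    (f : Fin K → ℝ → ℝ) (hfmeas : ∀ k, Measurable (f k))
    (hfnn : ∀ k r, 0 ≤ f k r) (hfint : ∀ k, ∫ r in Set.Ici (0 : ℝ), f k r = 1)
    (H : Fin K → Ω → ℝ) (hHmeas : ∀ k, Measurable (H k)) (hHnn : ∀ k ω, 0 ≤ H k ω)
    (I : Fin K → ℝ → Ω → ℝ)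
    (hImeas : ∀ k, Measurable (Function.uncurry (I k)))
    (hInn : ∀ k, ∀ r : ℝ, 0 ≤ r → ∀ ω, 0 ≤ I k r ω)
    (hindep : ∀ k, ∀ r : ℝ, 0 ≤ r → IndepFun (H k) (I k r) ℙ)
    (hI1 : ∀ k, ∀ r : ℝ, 0 ≤ r → Integrable (I k r) ℙ)
    (hI2 : ∀ k, ∀ r : ℝ, 0 ≤ r → Integrable (fun ω => (I k r ω) ^ 2) ℙ)
    (μ σ Ξ : Fin K → ℝ → ℝ)
    (hμmeas : ∀ k, Measurable (μ k)) (hσmeas : ∀ k, Measurable (σ k))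
    (hΞmeas : ∀ k, Measurable (Ξ k))
    (hμ : ∀ k, ∀ r : ℝ, 0 ≤ r → μ k r = ∫ ω, I k r ω)
    (hσ : ∀ k, ∀ r : ℝ, 0 ≤ r → (σ k r) ^ 2 = ∫ ω, (I k r ω - μ k r) ^ 2)
    (hσpos : ∀ k, ∀ r : ℝ, 0 ≤ r → 0 < σ k r)
    (hΞnn : ∀ k, ∀ r : ℝ, 0 ≤ r → 0 ≤ Ξ k r)
    (hpos : ∀ k, ∀ r : ℝ, 0 ≤ r → ∀ᵐ ω ∂(ℙ : Measure Ω), 0 < N₀ + I k r ω / PG)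
    (hGauss : ∀ k, ∀ r : ℝ, 0 ≤ r → ∀ x : ℝ,
      |(ℙ {ω | (I k r ω - μ k r) / σ k r ≤ x}).toReal - stdNormalCDF x| ≤
        Ξ k r * berryC x)
    (ζ Vp Vm : Fin K → ℝ → ℝ → ℝ → ℝ)
    (hζ : ∀ k h τ r, ζ k h τ r =
      (P k * (h * G k r / (Real.exp τ - 1) - N₀ / P k) * PG - μ k r) / σ k r)
    (hVp : ∀ k h τ r, Vp k h τ r =
      if (Real.exp τ - 1) * N₀ / (P k * G k r) ≤ h then
        min 1 (stdNormalCDF (ζ k h τ r) + Ξ k r * berryC (ζ k h τ r)) else 0)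
    (hVm : ∀ k h τ r, Vm k h τ r =
      if (Real.exp τ - 1) * N₀ / (P k * G k r) ≤ h then
        max 0 (stdNormalCDF (ζ k h τ r) - Ξ k r * berryC (ζ k h τ r)) else 0)
    (τ : ℝ) (hτ : 0 < τ) :
    1 - (∑ k, pstar k * ∫ r in Set.Ici (0 : ℝ), f k r * ∫ ω, Vp k (H k ω) τ r) ≤
        (∑ k, pstar k * ∫ r in Set.Ici (0 : ℝ),
          (ℙ {ω | Real.log (1 + P k * H k ω * G k r / (N₀ + I k r ω / PG)) < τ}).toReal
            * f k r) ∧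
      (∑ k, pstar k * ∫ r in Set.Ici (0 : ℝ),
          (ℙ {ω | Real.log (1 + P k * H k ω * G k r / (N₀ + I k r ω / PG)) < τ}).toReal
            * f k r) ≤
        1 - (∑ k, pstar k * ∫ r in Set.Ici (0 : ℝ), f k r * ∫ ω, Vm k (H k ω) τ r) := by
  have (k : Fin K) := isProbabilityMeasure_distanceLaw (hfmeas k) (hfnn k) (hfint k)
  have hae {k : Fin K} {p : ℝ → Prop} : (∀ r, 0 ≤ r → p r) → ∀ᵐ r ∂distanceLaw (f k), p r :=
    ae_distanceLaw_of_forall_nonneg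
  simp only [← measureReal_def, mul_comm _ (f _ _), hVp, hVm, hζ,
    ← integral_distanceLaw (hfmeas _) (hfnn _)]
  exact barss_outage_probability_bounds_general
    (lo := fun k r => normalLowerEnvelope (μ k r) (σ k r) (Ξ k r))
    (up := fun k r => normalUpperEnvelope (μ k r) (σ k r) (Ξ k r))
    hpstar hpsum hP (zero_lt_one.trans_le hPG) hτ
    hGmeas (fun k => hae (hGpos k)) hHmeas (fun k => .of_forall (hHnn k)) hImeas
    (fun k => hae fun r hr => .of_forall (hInn k r hr)) (fun k => hae (hindep k))
    (fun k => hae (hpos k))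
    (fun k => measurable_normalLowerEnvelope (hμmeas k) (hσmeas k) (hΞmeas k))
    (fun k => measurable_normalUpperEnvelope (hμmeas k) (hσmeas k) (hΞmeas k))
    (fun _ => .of_forall fun _ => normalLowerEnvelope_nonneg _ _ _)
    (fun _ => .of_forall fun _ => normalUpperEnvelope_le_one _ _ _)
    (fun k => hae fun r hr => measureReal_le_mem_Icc_normalEnvelope (hσpos k r hr) (hGauss k r hr))
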